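/- arXiv:1404.3118 — 3 statements merged into one kernel-verified Lean document; each statement's English description precedes it below -/
import Mathlib

section
/- Let m ≥ 2 be an integer, let p be a real number with 1 < p < m, and let λ be a Borel probability measure on ℝ^m. Then for every compactly supported Lipschitz function φ : ℝ^m → ℝ one has ((m−p)/p)^p · ∫_{ℝ^m} ( ∫_{ℝ^m} ‖x−y‖^(−p) dλ(y) ) · |φ(x)|^p dx ≤ ∫_{ℝ^m} ‖Dφ(x)‖^p dx, where the inner integral is taken in [0,∞], the outer integrals are with respect to Lebesgue measure, and Dφ denotes the almost-everywhere defined (Rademacher) derivative of φ. -/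
open MeasureTheory
open scoped ENNReal NNReal

/-!
Along almost every ray, `|φ x| ≤ ‖x‖ ∫₁^∞ ‖Dφ (t x)‖ dt` by the fundamental theorem of calculus.
The dilation `f ↦ f (t ·)` multiplies the `Lᵖ` norm by `t ^ (-n / p)`, where `n` is the dimension,
so Minkowski's integral inequality gives
`‖φ / ‖·‖‖ₚ ≤ (∫₁^∞ t ^ (-n / p) dt) ‖Dφ‖ₚ = p / (n - p) * ‖Dφ‖ₚ`,
the Hardy inequality with one pole at the origin. It is translation invariant, and integrating it
over the pole against `lam` gives the theorem by Tonelli.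
-/

open Filter Module Set Topology

section IntegralInequalities

variable {α β : Type*} [MeasurableSpace α] [MeasurableSpace β] {μ : Measure α} {ν : Measure β}
  {p : ℝ}

lemma rpow_lintegral_le_measure_univ_rpow_mul (hp : 1 ≤ p) {f : β → ℝ≥0∞}
    (hf : AEMeasurable f ν) :
    (∫⁻ t, f t ∂ν) ^ p ≤ ν univ ^ (p - 1) * ∫⁻ t, f t ^ p ∂ν := by
  have hp0 : 0 < p := by linarith
  have hLp := eLpNorm'_le_eLpNorm'_mul_rpow_measure_univ one_pos hp hf.aestronglyMeasurable
  simp only [eLpNorm'_eq_lintegral_enorm, enorm_eq_self, ENNReal.rpow_one, div_one] at hLp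
  calc (∫⁻ t, f t ∂ν) ^ p
      ≤ ((∫⁻ t, f t ^ p ∂ν) ^ (1 / p) * ν univ ^ (1 - 1 / p)) ^ p := by gcongr
    _ = ν univ ^ (p - 1) * ∫⁻ t, f t ^ p ∂ν := by
      rw [ENNReal.mul_rpow_of_nonneg _ _ hp0.le, ← ENNReal.rpow_mul, ← ENNReal.rpow_mul,
        one_div_mul_cancel hp0.ne', sub_mul, one_div_mul_cancel hp0.ne', one_mul,
        ENNReal.rpow_one, mul_comm]

lemma lintegral_rpow_lintegral_le_of_slice_le [SFinite μ] [SFinite ν] (hp : 1 ≤ p)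
    {F : α → β → ℝ≥0∞} (hF : Measurable (Function.uncurry F)) {A : ℝ≥0∞}
    (hA : ∀ᵐ t ∂ν, ∫⁻ x, F x t ^ p ∂μ ≤ A) :
    ∫⁻ x, (∫⁻ t, F x t ∂ν) ^ p ∂μ ≤ ν univ ^ p * A := by
  have hFp : Measurable (Function.uncurry fun x t ↦ F x t ^ p) := hF.pow_const p
  calc ∫⁻ x, (∫⁻ t, F x t ∂ν) ^ p ∂μ
      ≤ ∫⁻ x, ν univ ^ (p - 1) * ∫⁻ t, F x t ^ p ∂ν ∂μ :=
        lintegral_mono fun x ↦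
          rpow_lintegral_le_measure_univ_rpow_mul hp hF.of_uncurry_left.aemeasurable
    _ = ν univ ^ (p - 1) * ∫⁻ t, ∫⁻ x, F x t ^ p ∂μ ∂ν := by
        rw [lintegral_const_mul _ hFp.lintegral_prod_right,
          lintegral_lintegral_swap hFp.aemeasurable]
    _ ≤ ν univ ^ (p - 1) * (A * ν univ) := by
        rw [← lintegral_const]
        exact mul_le_mul_right (lintegral_mono_ae hA) _
    _ = ν univ ^ p * A := by
        nth_rw 2 [← ENNReal.rpow_one (ν univ)]
        rw [mul_left_comm, ← ENNReal.rpow_add_of_nonneg _ _ (sub_nonneg.2 hp) zero_le_one,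
          sub_add_cancel, mul_comm]

end IntegralInequalities

lemma setLIntegral_Ioi_ofReal_rpow {a c : ℝ} (ha : a < -1) (hc : 0 < c) :
    ∫⁻ t in Ioi c, ENNReal.ofReal (t ^ a) = ENNReal.ofReal (-c ^ (a + 1) / (a + 1)) := by
  rw [← integral_Ioi_rpow_of_lt ha hc,
    ofReal_integral_eq_lintegral_ofReal (integrableOn_Ioi_rpow_of_lt ha hc)]
  filter_upwards [ae_restrict_mem measurableSet_Ioi] with t ht
  exact Real.rpow_nonneg (hc.trans ht).le _

lemma enorm_le_setLIntegral_Ioi_enorm_deriv {f : ℝ → ℝ} {a : ℝ}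
    (hf : ∀ b, AbsolutelyContinuousOnInterval f a b) (hlim : Tendsto f atTop (𝓝 0)) :
    ‖f a‖ₑ ≤ ∫⁻ t in Ioi a, ‖deriv f t‖ₑ := by
  have hdiff : Tendsto (fun b ↦ ‖f b - f a‖ₑ) atTop (𝓝 ‖f a‖ₑ) := by
    simpa using (hlim.sub_const (f a)).enorm
  refine le_of_tendsto hdiff ?_
  filter_upwards [eventually_ge_atTop a] with b hab
  rw [← (hf b).integral_deriv_eq_sub, intervalIntegral.integral_of_le hab]
  exact (enorm_integral_le_lintegral_enorm _).trans (lintegral_mono_set Ioc_subset_Ioi_self)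

lemma enorm_le_enorm_mul_setLIntegral_enorm_fderiv_smul {E : Type*} [NormedAddCommGroup E]
    [NormedSpace ℝ E] {φ : E → ℝ} {K : ℝ≥0} (hLip : LipschitzWith K φ)
    (hsupp : HasCompactSupport φ) {x : E} (hx : x ≠ 0)
    (hdiff : ∀ᵐ t ∂volume.restrict (Ioi (1 : ℝ)), DifferentiableAt ℝ φ (t • x)) :
    ‖φ x‖ₑ ≤ ‖x‖ₑ * ∫⁻ t in Ioi (1 : ℝ), ‖fderiv ℝ φ (t • x)‖ₑ := by
  have hline : LipschitzWith (K * ‖ContinuousLinearMap.toSpanSingleton ℝ x‖₊)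
      fun t : ℝ ↦ φ (t • x) :=
    hLip.comp (ContinuousLinearMap.toSpanSingleton ℝ x).lipschitz
  have hlim : Tendsto (fun t : ℝ ↦ φ (t • x)) atTop (𝓝 0) :=
    (hsupp.comp_isClosedEmbedding (isClosedEmbedding_smul_left hx)).is_zero_at_infty.mono_left
      atTop_le_cocompact
  calc ‖φ x‖ₑ ≤ ∫⁻ t in Ioi (1 : ℝ), ‖deriv (fun t : ℝ ↦ φ (t • x)) t‖ₑ := by
        simpa using enorm_le_setLIntegral_Ioi_enorm_deriv (a := 1)
          (fun _ ↦ hline.lipschitzOnWith.absolutelyContinuousOnInterval) hlim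
    _ ≤ ∫⁻ t in Ioi (1 : ℝ), ‖x‖ₑ * ‖fderiv ℝ φ (t • x)‖ₑ := by
        refine lintegral_mono_ae ?_
        filter_upwards [hdiff] with t ht
        have hsmul : HasDerivAt (fun t : ℝ ↦ t • x) x t := by
          simpa using (hasDerivAt_id t).smul_const x
        have hchain : HasDerivAt (fun t : ℝ ↦ φ (t • x)) (fderiv ℝ φ (t • x) x) t :=
          ht.hasFDerivAt.comp_hasDerivAt t hsmul
        rw [hchain.deriv, mul_comm]
        exact ContinuousLinearMap.le_opENorm _ _
    _ = ‖x‖ₑ * ∫⁻ t in Ioi (1 : ℝ), ‖fderiv ℝ φ (t • x)‖ₑ :=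
        lintegral_const_mul' _ _ enorm_ne_top

lemma ofReal_integral_norm_fderiv_rpow {E F : Type*} [NormedAddCommGroup E] [NormedSpace ℝ E]
    [MeasurableSpace E] [OpensMeasurableSpace E] [NormedAddCommGroup F] [NormedSpace ℝ F]
    [CompleteSpace F] {μ : Measure E} [IsFiniteMeasureOnCompacts μ] {p : ℝ} (hp : 0 < p)
    {φ : E → F} {K : ℝ≥0} (hLip : LipschitzWith K φ) (hsupp : HasCompactSupport φ) :
    ENNReal.ofReal (∫ x, ‖fderiv ℝ φ x‖ ^ p ∂μ) = ∫⁻ x, ‖fderiv ℝ φ x‖ₑ ^ p ∂μ := by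
  have hint : Integrable (fun x ↦ ‖fderiv ℝ φ x‖ ^ p) μ := by
    have hsupp_pow : HasCompactSupport fun x ↦ ‖fderiv ℝ φ x‖ ^ p :=
      (hsupp.fderiv (𝕜 := ℝ)).comp_left (g := fun L ↦ ‖L‖ ^ p) (by simp [hp.ne'])
    rw [← integrableOn_iff_integrable_of_support_subset (subset_tsupport _)]
    refine Measure.integrableOn_of_bounded (M := (K : ℝ) ^ p)
      hsupp_pow.isCompact.measure_lt_top.ne
      ((measurable_fderiv ℝ φ).norm.pow_const p).aestronglyMeasurable (.of_forall fun x ↦ ?_)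
    rw [Real.norm_of_nonneg (by positivity)]
    gcongr
    exact norm_fderiv_le_of_lipschitz ℝ hLip
  rw [ofReal_integral_eq_lintegral_ofReal hint (.of_forall fun x ↦ by positivity)]
  refine lintegral_congr fun x ↦ ?_
  rw [← ENNReal.ofReal_rpow_of_nonneg (norm_nonneg _) hp.le, ofReal_norm]

section FiniteDimensional

variable {E : Type*} [NormedAddCommGroup E] [NormedSpace ℝ E] [FiniteDimensional ℝ E]
  [MeasurableSpace E] [BorelSpace E] {μ : Measure E} [μ.IsAddHaarMeasure]

lemma lintegral_comp_smul_addHaar (f : E → ℝ≥0∞) {r : ℝ} (hr : r ≠ 0) :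
    ∫⁻ x, f (r • x) ∂μ = ENNReal.ofReal |(r ^ finrank ℝ E)⁻¹| * ∫⁻ x, f x ∂μ := by
  rw [← smul_eq_mul, ← lintegral_smul_measure, ← Measure.map_addHaar_smul μ hr]
  exact (lintegral_map_equiv f (Homeomorph.smulOfNeZero r hr).toMeasurableEquiv).symm

lemma ae_ae_smul_of_ae {P : E → Prop} (hP : ∀ᵐ x ∂μ, P x) :
    ∀ᵐ x ∂μ, ∀ᵐ t : ℝ, P (t • x) := by
  obtain ⟨s, hs, hs_meas, hsP⟩ := hP.exists_measurable_mem
  suffices h : ∀ᵐ x ∂μ, ∀ᵐ t : ℝ, t • x ∈ s from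
    h.mono fun x hx ↦ hx.mono fun t ht ↦ hsP _ ht
  have hs_smul : MeasurableSet {z : E × ℝ | z.2 • z.1 ∈ s} :=
    (measurable_snd.smul measurable_fst) hs_meas
  rw [Measure.ae_ae_comm hs_smul]
  filter_upwards [Measure.ae_ne volume (0 : ℝ)] with t ht
  exact (Measure.quasiMeasurePreserving_smul μ ht).ae hs

variable {p : ℝ}

lemma lintegral_ofReal_rpow_mul_comp_smul_rpow (hp : 0 < p) (f : E → ℝ≥0∞) {t : ℝ}
    (ht : 0 < t) :
    ∫⁻ x, (ENNReal.ofReal (t ^ (finrank ℝ E / p)) * f (t • x)) ^ p ∂μ = ∫⁻ x, f x ^ p ∂μ := by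
  have hfactor : ENNReal.ofReal (t ^ (finrank ℝ E / p)) ^ p =
      ENNReal.ofReal (t ^ finrank ℝ E) := by
    rw [ENNReal.ofReal_rpow_of_nonneg (by positivity) hp.le, ← Real.rpow_mul ht.le,
      div_mul_cancel₀ _ hp.ne', Real.rpow_natCast]
  simp_rw [ENNReal.mul_rpow_of_nonneg _ _ hp.le, hfactor]
  rw [lintegral_const_mul' _ _ ENNReal.ofReal_ne_top,
    lintegral_comp_smul_addHaar (fun x ↦ f x ^ p) ht.ne', ← mul_assoc,
    ← ENNReal.ofReal_mul (by positivity), abs_of_pos (by positivity),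
    mul_inv_cancel₀ (by positivity), ENNReal.ofReal_one, one_mul]

/- Minkowski's inequality is applied for the measure `t ^ (-n / p) dt` and the functions
`t ^ (n / p) * f (t ·)`, whose `Lᵖ` norms do not depend on `t`. -/
lemma lintegral_rpow_setLIntegral_comp_smul_le (hp : 1 ≤ p) (hpn : p < finrank ℝ E)
    {f : E → ℝ≥0∞} (hf : Measurable f) :
    ∫⁻ x, (∫⁻ t in Ioi (1 : ℝ), f (t • x)) ^ p ∂μ ≤
      ENNReal.ofReal (p / (finrank ℝ E - p)) ^ p * ∫⁻ x, f x ^ p ∂μ := by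
  have hp0 : 0 < p := by linarith
  have hnp : 0 < finrank ℝ E - p := sub_pos.2 hpn
  set s : ℝ := finrank ℝ E / p with hs
  set w : ℝ → ℝ≥0∞ := fun t ↦ ENNReal.ofReal (t ^ (-s)) with hw
  set ν : Measure ℝ := (volume.restrict (Ioi 1)).withDensity w with hν
  have hw_meas : Measurable w := by fun_prop
  have hmass : ν univ = ENNReal.ofReal (p / (finrank ℝ E - p)) := by
    have hs1 : -s < -1 := by rw [neg_lt_neg_iff, hs, one_lt_div hp0]; exact hpn
    rw [hν, withDensity_apply _ MeasurableSet.univ, Measure.restrict_univ,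
      setLIntegral_Ioi_ofReal_rpow hs1 one_pos, Real.one_rpow, hs]
    congr 1
    rw [div_eq_div_iff (by linarith) hnp.ne']
    field_simp
    ring
  have hreweight (x : E) : ∫⁻ t in Ioi (1 : ℝ), f (t • x) =
      ∫⁻ t, ENNReal.ofReal (t ^ s) * f (t • x) ∂ν := by
    rw [hν, lintegral_withDensity_eq_lintegral_mul _ hw_meas (by fun_prop)]
    refine setLIntegral_congr_fun measurableSet_Ioi fun t ht ↦ ?_
    have ht0 : 0 < t := one_pos.trans ht
    simp only [Pi.mul_apply, hw]
    rw [← mul_assoc, ← ENNReal.ofReal_mul (by positivity), ← Real.rpow_add ht0]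
    simp
  have hslice : ∀ᵐ t ∂ν, ∫⁻ x, (ENNReal.ofReal (t ^ s) * f (t • x)) ^ p ∂μ ≤
      ∫⁻ x, f x ^ p ∂μ := by
    refine (withDensity_absolutelyContinuous _ _).ae_le ?_
    filter_upwards [ae_restrict_mem measurableSet_Ioi] with t ht
    exact (lintegral_ofReal_rpow_mul_comp_smul_rpow hp0 f (one_pos.trans ht)).le
  simp_rw [hreweight, ← hmass]
  exact lintegral_rpow_lintegral_le_of_slice_le hp (by fun_prop) hslice

theorem hardy_inequality (hp : 1 ≤ p) (hpn : p < finrank ℝ E) {φ : E → ℝ} {K : ℝ≥0}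
    (hLip : LipschitzWith K φ) (hsupp : HasCompactSupport φ) :
    ENNReal.ofReal (((finrank ℝ E - p) / p) ^ p) * ∫⁻ x, ‖x‖ₑ ^ (-p) * ‖φ x‖ₑ ^ p ∂μ ≤
      ∫⁻ x, ‖fderiv ℝ φ x‖ₑ ^ p ∂μ := by
  have hp0 : 0 < p := by linarith
  have hratio : 0 < p / (finrank ℝ E - p) := div_pos hp0 (sub_pos.2 hpn)
  have : Nontrivial E := nontrivial_of_finrank_pos (R := ℝ) (by exact_mod_cast hp0.trans hpn)
  have hray : ∀ᵐ x ∂μ, ‖x‖ₑ ^ (-p) * ‖φ x‖ₑ ^ p ≤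
      (∫⁻ t in Ioi (1 : ℝ), ‖fderiv ℝ φ (t • x)‖ₑ) ^ p := by
    filter_upwards [ae_ae_smul_of_ae hLip.ae_differentiableAt, Measure.ae_ne μ 0] with x hdiff hx
    have hx_pow : ‖x‖ₑ ^ p ≠ 0 := by simp [hx]
    rw [ENNReal.rpow_neg, ENNReal.inv_mul_le_iff hx_pow (by finiteness),
      ← ENNReal.mul_rpow_of_nonneg _ _ hp0.le]
    gcongr
    exact enorm_le_enorm_mul_setLIntegral_enorm_fderiv_smul hLip hsupp hx
      (ae_restrict_of_ae hdiff)
  have hconst : ENNReal.ofReal (((finrank ℝ E - p) / p) ^ p) =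
      (ENNReal.ofReal (p / (finrank ℝ E - p)) ^ p)⁻¹ := by
    rw [← inv_div p, Real.inv_rpow hratio.le,
      ENNReal.ofReal_inv_of_pos (Real.rpow_pos_of_pos hratio p), ENNReal.ofReal_rpow_of_pos hratio]
  have hconst_ne_zero : ENNReal.ofReal (p / (finrank ℝ E - p)) ^ p ≠ 0 :=
    (ENNReal.rpow_pos (ENNReal.ofReal_pos.2 hratio) ENNReal.ofReal_ne_top).ne'
  rw [hconst, ENNReal.inv_mul_le_iff hconst_ne_zero (by finiteness)]
  exact (lintegral_mono_ae hray).trans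
    (lintegral_rpow_setLIntegral_comp_smul_le hp hpn (measurable_fderiv ℝ φ).enorm)

theorem hardy_inequality_with_pole (hp : 1 ≤ p) (hpn : p < finrank ℝ E) {φ : E → ℝ} {K : ℝ≥0}
    (hLip : LipschitzWith K φ) (hsupp : HasCompactSupport φ) (y : E) :
    ENNReal.ofReal (((finrank ℝ E - p) / p) ^ p) * ∫⁻ x, ‖x - y‖ₑ ^ (-p) * ‖φ x‖ₑ ^ p ∂μ ≤
      ∫⁻ x, ‖fderiv ℝ φ x‖ₑ ^ p ∂μ := by
  have h := hardy_inequality (μ := μ) hp hpn (hLip.comp (isometry_add_right y).lipschitz)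
    (hsupp.comp_homeomorph (Homeomorph.addRight y))
  rw [← lintegral_add_right_eq_self _ y,
    ← lintegral_add_right_eq_self (fun x ↦ ‖fderiv ℝ φ x‖ₑ ^ p) y]
  simpa [Function.comp_def, fderiv_comp_add_right] using h

theorem hardy_multipole_general (hp : 1 ≤ p) (hpn : p < finrank ℝ E) (lam : Measure E)
    [SFinite lam] {φ : E → ℝ} {K : ℝ≥0} (hLip : LipschitzWith K φ)
    (hsupp : HasCompactSupport φ) :
    ENNReal.ofReal (((finrank ℝ E - p) / p) ^ p) *
        ∫⁻ x, (∫⁻ y, ‖x - y‖ₑ ^ (-p) ∂lam) * ENNReal.ofReal (|φ x| ^ p) ∂μ ≤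
      ENNReal.ofReal (∫ x, ‖fderiv ℝ φ x‖ ^ p ∂μ) * lam univ := by
  have hp0 : 0 < p := by linarith
  have hφ_meas : Measurable φ := hLip.continuous.measurable
  have hφ_pow (x : E) : ENNReal.ofReal (|φ x| ^ p) = ‖φ x‖ₑ ^ p := by
    rw [← ENNReal.ofReal_rpow_of_nonneg (abs_nonneg _) hp0.le, Real.enorm_eq_ofReal_abs]
  have htonelli : ∫⁻ x, (∫⁻ y, ‖x - y‖ₑ ^ (-p) ∂lam) * ‖φ x‖ₑ ^ p ∂μ =
      ∫⁻ y, ∫⁻ x, ‖x - y‖ₑ ^ (-p) * ‖φ x‖ₑ ^ p ∂μ ∂lam := by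
    have hmeas : Measurable (Function.uncurry fun x y : E ↦ ‖x - y‖ₑ ^ (-p) * ‖φ x‖ₑ ^ p) := by
      fun_prop
    rw [← lintegral_lintegral_swap hmeas.aemeasurable]
    exact lintegral_congr fun x ↦ (lintegral_mul_const' _ _ (by finiteness)).symm
  simp_rw [hφ_pow]
  rw [htonelli, ofReal_integral_norm_fderiv_rpow hp0 hLip hsupp,
    ← lintegral_const_mul' _ _ ENNReal.ofReal_ne_top, ← lintegral_const]
  exact lintegral_mono (hardy_inequality_with_pole hp hpn hLip hsupp)

end FiniteDimensional

/-- The multipole Hardy inequality (Theorem 4.2 of the paper, inequality (4.23)) on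
Euclidean space `ℝ^m` (the Cartan–Hadamard case `κ = 0`): averaging the single-pole
Hardy weights `((m−p)/p)^p ‖x−y‖^(−p)` against a Borel probability measure `λ` yields
a Hardy weight for the `p`-Laplacian. -/
theorem hardy_multipole (m : ℕ) (hm : 2 ≤ m) (p : ℝ) (hp1 : 1 < p) (hpm : p < m)
    (lam : Measure (EuclideanSpace ℝ (Fin m))) [IsProbabilityMeasure lam]
    (φ : EuclideanSpace ℝ (Fin m) → ℝ) (K : NNReal)
    (hLip : LipschitzWith K φ) (hsupp : HasCompactSupport φ) :
    ENNReal.ofReal ((((m : ℝ) - p) / p) ^ p) *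
        ∫⁻ x : EuclideanSpace ℝ (Fin m),
          (∫⁻ y, (‖x - y‖₊ : ℝ≥0∞) ^ (-p) ∂lam) * ENNReal.ofReal (|φ x| ^ p) ≤
      ENNReal.ofReal (∫ x : EuclideanSpace ℝ (Fin m), ‖fderiv ℝ φ x‖ ^ p) := by
  simpa [enorm_eq_nnnorm] using
    hardy_multipole_general hp1.le (by simpa using hpm) lam hLip hsupp
end

section
/- Let α > 0, κ > 0 and r > 0 be real numbers. Then sinh(κr)^α · ∫_r^∞ sinh(κs)^(−α) ds ≤ 1/(α·κ). -/
open MeasureTheory Real Set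

/-!
Since `sinh (x + y) - sinh x * exp y = exp (-x) * sinh y ≥ 0` for `y ≥ 0`, the function
`s ↦ sinh (κ * s)` grows at least at the exponential rate `κ` to the right of any point `r`.
Hence `sinh (κ * r) ^ α * sinh (κ * s) ^ (-α)` is at most `exp (-(α * κ * (s - r)))`, whose integral
over `s > r` is `1 / (α * κ)`.
-/

theorem sinh_mul_exp_le_sinh_add (x : ℝ) {y : ℝ} (hy : 0 ≤ y) :
    sinh x * exp y ≤ sinh (x + y) := by
  have sinh_add_sub : sinh (x + y) - sinh x * exp y = exp (-x) * sinh y := by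
    rw [sinh_add, ← cosh_add_sinh y, ← cosh_sub_sinh x]
    ring
  have : 0 ≤ exp (-x) * sinh y := mul_nonneg (exp_pos _).le (sinh_nonneg_iff.2 hy)
  linarith

theorem rpow_mul_rpow_neg_le_exp {a b t α : ℝ} (ha : 0 < a) (hα : 0 ≤ α) (hab : a * exp t ≤ b) :
    a ^ α * b ^ (-α) ≤ exp (-(α * t)) := by
  have hb : 0 < b := (mul_pos ha (exp_pos t)).trans_le hab
  have div_le_exp : a / b ≤ exp (-t) := by
    rwa [div_le_iff₀ hb, exp_neg, inv_mul_eq_div, le_div_iff₀ (exp_pos t)]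
  calc a ^ α * b ^ (-α) = (a / b) ^ α := by
        rw [rpow_neg hb.le, div_rpow ha.le hb.le, div_eq_mul_inv]
    _ ≤ exp (-t) ^ α := rpow_le_rpow (div_pos ha hb).le div_le_exp hα
    _ = exp (-(α * t)) := by rw [← exp_mul, neg_mul, mul_comm t]

theorem exp_neg_mul_sub (c r s : ℝ) : exp (-(c * (s - r))) = exp (c * r) * exp (-c * s) := by
  rw [← exp_add]
  ring_nf

theorem integrableOn_exp_neg_mul_sub_Ioi {c : ℝ} (hc : 0 < c) (r : ℝ) :
    IntegrableOn (fun s ↦ exp (-(c * (s - r)))) (Ioi r) := by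
  simp only [exp_neg_mul_sub]
  exact (integrableOn_exp_mul_Ioi (neg_neg_of_pos hc) r).const_mul _

theorem integral_exp_neg_mul_sub_Ioi {c : ℝ} (hc : 0 < c) (r : ℝ) :
    ∫ s in Ioi r, exp (-(c * (s - r))) = 1 / c := by
  simp only [exp_neg_mul_sub]
  rw [integral_const_mul, integral_exp_mul_Ioi (neg_neg_of_pos hc), neg_div_neg_eq, mul_div_assoc',
    ← exp_neg_mul_sub, sub_self, mul_zero, neg_zero, exp_zero]

theorem rpow_mul_integral_Ioi_rpow_neg_le {f : ℝ → ℝ} {α κ r : ℝ} (hα : 0 < α) (hκ : 0 < κ)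
    (hfr : 0 < f r) (hf : ∀ s ∈ Ioi r, f r * exp (κ * (s - r)) ≤ f s) :
    f r ^ α * ∫ s in Ioi r, f s ^ (-α) ≤ 1 / (α * κ) := by
  have hακ : 0 < α * κ := mul_pos hα hκ
  have integrand_nonneg : ∀ s ∈ Ioi r, 0 ≤ f r ^ α * f s ^ (-α) := fun s hs ↦ by
    have hfs : 0 < f s := (mul_pos hfr (exp_pos _)).trans_le (hf s hs)
    positivity
  have integrand_le : ∀ s ∈ Ioi r, f r ^ α * f s ^ (-α) ≤ exp (-(α * κ * (s - r))) :=
    fun s hs ↦ by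
      simpa only [mul_assoc] using rpow_mul_rpow_neg_le_exp hfr hα.le (hf s hs)
  calc f r ^ α * ∫ s in Ioi r, f s ^ (-α) = ∫ s in Ioi r, f r ^ α * f s ^ (-α) :=
        (integral_const_mul _ _).symm
    _ ≤ ∫ s in Ioi r, exp (-(α * κ * (s - r))) :=
        integral_mono_of_nonneg (ae_restrict_of_forall_mem measurableSet_Ioi integrand_nonneg)
          (integrableOn_exp_neg_mul_sub_Ioi hακ r)
          (ae_restrict_of_forall_mem measurableSet_Ioi integrand_le)
    _ = 1 / (α * κ) := integral_exp_neg_mul_sub_Ioi hακ r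

/-- The first part of property (4.17) of Example 4.1 of the paper:
`sinh(κr)^α ∫_r^∞ sinh(κs)^(−α) ds ≤ 1/(ακ)` for all `r > 0`; in terms of the Hardy
weight `χ_α`, this says `χ_α(r) ≥ ((p−1)/p)^p α^p κ^p`. -/
theorem sinh_integral_upper (α κ r : ℝ) (hα : 0 < α) (hκ : 0 < κ) (hr : 0 < r) :
    Real.sinh (κ * r) ^ α * ∫ s in Set.Ioi r, Real.sinh (κ * s) ^ (-α) ≤
      1 / (α * κ) := by
  have sinh_pos : 0 < sinh (κ * r) := sinh_pos_iff.2 (mul_pos hκ hr)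
  have sinh_growth : ∀ s ∈ Ioi r, sinh (κ * r) * exp (κ * (s - r)) ≤ sinh (κ * s) := fun s hs ↦ by
    have hs : 0 ≤ κ * (s - r) := mul_nonneg hκ.le (sub_pos.2 hs).le
    simpa only [← mul_add, add_sub_cancel] using sinh_mul_exp_le_sinh_add (κ * r) hs
  exact rpow_mul_integral_Ioi_rpow_neg_le (f := fun s ↦ sinh (κ * s)) hα hκ sinh_pos sinh_growth
end

section
/- Let m ≥ 1 be an integer and let Ω ⊂ ℝ^m be a bounded, connected open set with smooth boundary. Let A, B : closure(Ω) → ℝ be continuous with B(x) ≥ 0 for all x and B not identically zero on Ω, and let F be a nonlinearity. Let u₁, u₂ : closure(Ω) → ℝ be continuously differentiable on closure(Ω), twice continuously differentiable on Ω, and satisfy: Δu₁ + A·u₁ − B·F(u₁) ≥ 0 on Ω; Δu₂ + A·u₂ − B·F(u₂) ≤ 0 on Ω; u₁ ≥ 0 on Ω; u₂ > 0 on Ω; and u₁ ≤ u₂ on ∂Ω, where Δ is the Euclidean Laplacian. Then u₁ ≤ u₂ on Ω. -/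
open MeasureTheory

/-- The Euclidean Laplacian: trace of the Hessian. -/
noncomputable def laplacian {m : ℕ} (u : EuclideanSpace ℝ (Fin m) → ℝ)
    (x : EuclideanSpace ℝ (Fin m)) : ℝ :=
  ∑ i, fderiv ℝ (fun y => fderiv ℝ u y (EuclideanSpace.single i (1 : ℝ))) x
    (EuclideanSpace.single i (1 : ℝ))

/-- An open set of `ℝ^m` with smooth boundary: it is the sublevel set of a smooth
function whose derivative does not vanish on the boundary. -/
def HasSmoothBoundary {m : ℕ} (Ω : Set (EuclideanSpace ℝ (Fin m))) : Prop :=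
  ∃ f : EuclideanSpace ℝ (Fin m) → ℝ, ContDiff ℝ (⊤ : ℕ∞) f ∧ Ω = {x | f x < 0} ∧
    ∀ x ∈ frontier Ω, fderiv ℝ f x ≠ 0

/-- A nonlinearity in the sense of (2.12) of the paper (with `p = 2`). -/
structure IsNonlinearity (F : ℝ → ℝ) : Prop where
  cont : ContinuousOn F (Set.Ici 0)
  zero : F 0 = 0
  pos : ∀ t : ℝ, 0 < t → 0 < F t
  strictMono : StrictMonoOn (fun t => F t / t) (Set.Ioi 0)
  tendsto_zero : Filter.Tendsto (fun t => F t / t) (nhdsWithin 0 (Set.Ioi 0)) (nhds 0)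
  tendsto_top : Filter.Tendsto (fun t => F t / t) Filter.atTop Filter.atTop

/-!
Let `f` be a defining function of `Ω`. For large `μ` the function `ψ = 2 - exp (μ f)` is positive on
`closure Ω` and satisfies `Δψ + Kψ < 0` near `∂Ω`, where `K` bounds `A` from above; minimizing the
quotient `(M u₂ - u₁) / ψ` shows that `u₁ ≤ M u₂` holds on `Ω`, for every `M ≥ 1`, as soon as it
holds on a fixed compact core `C ⊆ Ω`. If `u₁ ≤ u₂` fails on `C`, take `M = max_C u₁ / u₂ > 1`: then
`w = M u₂ - u₁` is nonnegative and vanishes somewhere in `Ω`. Where `u₂ < u₁`, monotonicity of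
`F(t) / t` linearizes the two inequalities to `Δw ≤ c w` with `c` locally bounded, so the strong
maximum principle (through the Hopf barrier `exp (μ g) - 1`) gives `u₁ = M u₂` on all of `Ω`. At a
point where `B > 0` this contradicts the strict monotonicity of `F(t) / t`.
-/

open Filter Topology Set
open scoped Laplacian InnerProductSpace

section Calculus

variable {E : Type*} [NormedAddCommGroup E] [NormedSpace ℝ E]

theorem deriv_deriv_nonneg_of_isLocalMin {g : ℝ → ℝ} {t : ℝ} (hmin : IsLocalMin g t)
    (hg : ContinuousAt g t) : 0 ≤ deriv (deriv g) t := by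
  by_contra! hneg
  have hmax : IsLocalMax g t := isLocalMax_of_deriv_deriv_neg hneg hmin.deriv_eq_zero hg
  have hconst : g =ᶠ[𝓝 t] fun _ => g t := by
    filter_upwards [hmin, hmax] with s hs hs' using le_antisymm hs' hs
  have hzero : deriv (deriv g) t = 0 := by
    simpa using hconst.deriv.deriv_eq
  exact hneg.ne hzero

theorem fderiv_fderiv_apply_nonneg_of_isLocalMin {u : E → ℝ} {x : E} (hu : ContDiffAt ℝ 2 u x)
    (hmin : IsLocalMin u x) (e : E) : 0 ≤ fderiv ℝ (fderiv ℝ u) x e e := by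
  let line : ℝ → E := fun t => x + t • e
  have hline (t : ℝ) : HasDerivAt line e t := by
    simpa only [one_smul] using ((hasDerivAt_id' t).smul_const e).const_add x
  have hline0 : line 0 = x := by simp [line]
  have hlim : Tendsto line (𝓝 0) (𝓝 x) := hline0 ▸ (hline 0).continuousAt.tendsto
  have hfirst : deriv (u ∘ line) =ᶠ[𝓝 0] fun t => fderiv ℝ u (line t) e := by
    filter_upwards [hlim.eventually (hu.eventually (by simp))] with t ht
    exact ((ht.differentiableAt two_ne_zero).hasFDerivAt.comp_hasDerivAt t (hline t)).deriv
  have hsecond : deriv (deriv (u ∘ line)) 0 = fderiv ℝ (fderiv ℝ u) x e e := by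
    have hu' : HasFDerivAt (fderiv ℝ u) (fderiv ℝ (fderiv ℝ u) x) (line 0) :=
      hline0 ▸ ((hu.fderiv_right (m := 1) (by norm_num)).differentiableAt
        one_ne_zero).hasFDerivAt
    rw [hfirst.deriv_eq]
    simpa using ((hu'.comp_hasDerivAt 0 (hline 0)).clm_apply (hasDerivAt_const 0 e)).deriv
  rw [← hsecond]
  refine deriv_deriv_nonneg_of_isLocalMin ?_ ?_
  · filter_upwards [hlim.eventually hmin] with t ht
    simpa only [Function.comp_apply, hline0] using ht
  · exact hu.continuousAt.comp_of_eq (hline 0).continuousAt hline0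

theorem fderiv_fderiv_exp_apply {f : E → ℝ} {x : E} (hf : ContDiffAt ℝ 2 f x) (e : E) :
    fderiv ℝ (fderiv ℝ fun y => Real.exp (f y)) x e e =
      Real.exp (f x) * (fderiv ℝ f x e ^ 2 + fderiv ℝ (fderiv ℝ f) x e e) := by
  have hfirst : fderiv ℝ (fun y => Real.exp (f y)) =ᶠ[𝓝 x]
      fun y => Real.exp (f y) • fderiv ℝ f y := by
    filter_upwards [hf.eventually (by simp)] with y hy
    exact (hy.differentiableAt two_ne_zero).hasFDerivAt.exp.fderiv
  have hf' : HasFDerivAt (fderiv ℝ f) (fderiv ℝ (fderiv ℝ f) x) x :=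
    ((hf.fderiv_right (m := 1) (by norm_num)).differentiableAt one_ne_zero).hasFDerivAt
  rw [hfirst.fderiv_eq,
    ((hf.differentiableAt two_ne_zero).hasFDerivAt.exp.fun_smul hf').fderiv]
  simp only [add_apply, smul_apply, ContinuousLinearMap.smulRight_apply, smul_eq_mul]
  ring

end Calculus

section Topology

theorem exists_pos_forall_mul_lt {X : Type*} [TopologicalSpace X] {S : Set X} (hS : IsCompact S)
    {w h : X → ℝ} (hw : ContinuousOn w S) (hh : ContinuousOn h S) (hpos : ∀ x ∈ S, 0 < w x) :
    ∃ ε > 0, ∀ x ∈ S, ε * h x < w x := by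
  obtain ⟨c, hc⟩ := (hS.image_of_continuousOn
    (hh.div hw fun x hx => (hpos x hx).ne')).bddAbove
  have hc' : 0 < |c| + 1 := by positivity
  refine ⟨(|c| + 1)⁻¹, inv_pos.2 hc', fun x hx => ?_⟩
  have hratio : h x / w x < |c| + 1 :=
    (hc (mem_image_of_mem _ hx)).trans_lt ((le_abs_self c).trans_lt (lt_add_one _))
  rw [inv_mul_lt_iff₀ hc']
  exact (div_lt_iff₀ (hpos x hx)).1 hratio

theorem exists_ball_subset_of_not_subset {X : Type*} [PseudoMetricSpace X] [ProperSpace X]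
    {Ω U : Set X} (hΩo : IsOpen Ω) (hΩc : IsPreconnected Ω) (hU : IsOpen U)
    (hne : (Ω ∩ U).Nonempty) (hΩU : ¬ Ω ⊆ U) :
    ∃ p ∈ U, ∃ z ∈ Ω \ U, Metric.ball p (dist p z) ⊆ U := by
  obtain ⟨x₀, ⟨hx₀cl, hx₀Ω⟩, hx₀⟩ : ∃ x ∈ closure U ∩ Ω, x ∉ U :=
    not_subset.1 fun h => hΩU (hΩc.subset_of_closure_inter_subset hU hne h)
  obtain ⟨r, hr, hball⟩ := Metric.isOpen_iff.1 hΩo x₀ hx₀Ω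
  obtain ⟨p, hpU, hp⟩ := Metric.mem_closure_iff.1 hx₀cl (r / 2) (half_pos hr)
  obtain ⟨z, hzU, hz⟩ := hU.isClosed_compl.exists_infDist_eq_dist ⟨x₀, hx₀⟩ p
  refine ⟨p, hpU, z, ⟨hball ?_, hzU⟩, hz ▸ Metric.ball_infDist_compl_subset⟩
  have hzp : dist p z ≤ dist p x₀ := hz ▸ Metric.infDist_le_dist_of_mem hx₀
  calc dist z x₀ ≤ dist p z + dist p x₀ := dist_triangle_left z x₀ p
    _ ≤ dist x₀ p + dist x₀ p := by rw [dist_comm x₀ p]; gcongr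
    _ < r := by linarith

end Topology

section MaximumPrinciple

variable {E : Type*} [NormedAddCommGroup E] [InnerProductSpace ℝ E] [FiniteDimensional ℝ E]

theorem laplacian_eq_sum_fderiv_fderiv {ι : Type*} [Fintype ι] (b : OrthonormalBasis ι ℝ E)
    (u : E → ℝ) (x : E) : Δ u x = ∑ i, fderiv ℝ (fderiv ℝ u) x (b i) (b i) := by
  simp [InnerProductSpace.laplacian_eq_iteratedFDeriv_orthonormalBasis u b,
    iteratedFDeriv_two_apply]

theorem continuous_laplacian {u : E → ℝ} (hu : ContDiff ℝ 2 u) : Continuous (Δ u) := by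
  rw [funext (laplacian_eq_sum_fderiv_fderiv (stdOrthonormalBasis ℝ E) u)]
  have hu'' : Continuous (fderiv ℝ (fderiv ℝ u)) :=
    (hu.fderiv_right (m := 1) (by norm_num)).continuous_fderiv one_ne_zero
  exact continuous_finsetSum _ fun i _ =>
    (hu''.clm_apply continuous_const).clm_apply continuous_const

theorem laplacian_nonneg_of_isLocalMin {u : E → ℝ} {x : E} (hu : ContDiffAt ℝ 2 u x)
    (hmin : IsLocalMin u x) : 0 ≤ Δ u x := by
  rw [laplacian_eq_sum_fderiv_fderiv (stdOrthonormalBasis ℝ E)]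
  exact Finset.sum_nonneg fun _ _ => fderiv_fderiv_apply_nonneg_of_isLocalMin hu hmin _

theorem laplacian_exp {f : E → ℝ} {x : E} (hf : ContDiffAt ℝ 2 f x) :
    Δ (fun y => Real.exp (f y)) x = Real.exp (f x) * (‖fderiv ℝ f x‖ ^ 2 + Δ f x) := by
  simp only [laplacian_eq_sum_fderiv_fderiv (stdOrthonormalBasis ℝ E), fderiv_fderiv_exp_apply hf,
    (stdOrthonormalBasis ℝ E).norm_dual, Finset.sum_add_distrib, ← Finset.mul_sum]

theorem laplacian_exp_mul {f : E → ℝ} {x : E} (hf : ContDiffAt ℝ 2 f x) (μ : ℝ) :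
    Δ (fun y => Real.exp (μ * f y)) x =
      Real.exp (μ * f x) * (μ * (μ * ‖fderiv ℝ f x‖ ^ 2 + Δ f x)) := by
  have hΔ : Δ (fun y => μ * f y) x = μ * Δ f x := InnerProductSpace.laplacian_smul μ hf
  have hfderiv : fderiv ℝ (fun y => μ * f y) x = μ • fderiv ℝ f x :=
    fderiv_const_mul (hf.differentiableAt two_ne_zero) μ
  rw [laplacian_exp (contDiffAt_const.mul hf), hΔ, hfderiv, norm_smul, mul_pow,
    Real.norm_eq_abs, sq_abs]
  ring

theorem exists_forall_lt_laplacian_exp_mul {f : E → ℝ} (hf : ContDiff ℝ 2 f) {S : Set E}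
    (hS : IsCompact S) (hf0 : ∀ x ∈ S, f x = 0) (hf' : ∀ x ∈ S, fderiv ℝ f x ≠ 0) (C : ℝ) :
    ∃ μ > 0, ∀ x ∈ S, C < Δ (fun y => Real.exp (μ * f y)) x := by
  obtain ⟨c, hc, hfderiv⟩ := hS.exists_forall_le' (a := 0)
    ((hf.continuous_fderiv two_ne_zero).norm.pow 2).continuousOn
    fun x hx => pow_pos (norm_pos_iff.2 (hf' x hx)) 2
  obtain ⟨L, hL⟩ := (hS.image (continuous_laplacian hf)).bddBelow
  have hlarge : ∀ᶠ μ in atTop, C < μ * (μ * c + L) :=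
    (tendsto_id.atTop_mul_atTop₀ (tendsto_atTop_add_const_right _ L
      (tendsto_id.atTop_mul_const hc))).eventually_gt_atTop C
  obtain ⟨μ, hμC, hμ⟩ := (hlarge.and (eventually_gt_atTop 0)).exists
  refine ⟨μ, hμ, fun x hx => hμC.trans_le ?_⟩
  rw [laplacian_exp_mul hf.contDiffAt, hf0 x hx, mul_zero, Real.exp_zero, one_mul]
  gcongr
  · exact hfderiv x hx
  · exact hL (mem_image_of_mem _ hx)

theorem pos_of_laplacian_neg {S U : Set E} (hS : IsCompact S) (hU : IsOpen U) (hUS : U ⊆ S)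
    {k : E → ℝ} (hk : ContinuousOn k S) (hkU : ContDiffOn ℝ 2 k U)
    (hbdry : ∀ x ∈ S \ U, 0 < k x) (hΔ : ∀ x ∈ U, k x ≤ 0 → Δ k x < 0) :
    ∀ x ∈ S, 0 < k x := by
  intro x hx
  obtain ⟨y, hyS, hmin⟩ := hS.exists_isMinOn ⟨x, hx⟩ hk
  refine lt_of_lt_of_le ?_ (hmin hx)
  by_contra! hky
  have hyU : y ∈ U := by
    by_contra hyU
    exact hky.not_gt (hbdry y ⟨hyS, hyU⟩)
  have hUy : U ∈ 𝓝 y := hU.mem_nhds hyU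
  exact (hΔ y hyU hky).not_ge <|
    laplacian_nonneg_of_isLocalMin (hkU.contDiffAt hUy) (hmin.isLocalMin (mem_of_superset hUy hUS))

theorem nonneg_of_strict_supersolution {S U : Set E} (hS : IsCompact S) (hU : IsOpen U)
    (hUS : U ⊆ S) {w ψ : E → ℝ} {K : ℝ} (hw : ContinuousOn w S) (hwU : ContDiffOn ℝ 2 w U)
    (hψ : ContDiff ℝ 2 ψ) (hψpos : ∀ x ∈ S, 0 < ψ x) (hψΔ : ∀ x ∈ U, Δ ψ x + K * ψ x < 0)
    (hbdry : ∀ x ∈ S \ U, 0 ≤ w x) (hwΔ : ∀ x ∈ U, w x < 0 → Δ w x + K * w x ≤ 0) :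
    ∀ x ∈ S, 0 ≤ w x := by
  intro q hq
  by_contra! hwq
  obtain ⟨y, hyS, hmin⟩ := hS.exists_isMinOn ⟨q, hq⟩
    (hw.div hψ.continuous.continuousOn fun x hx => (hψpos x hx).ne')
  obtain ⟨τ, hτ⟩ : ∃ τ, w y / ψ y = -τ := ⟨_, (neg_neg _).symm⟩
  have hτpos : 0 < τ := by
    have : w y / ψ y < 0 := (hmin hq).trans_lt (div_neg_of_neg_of_pos hwq (hψpos q hq))
    linarith
  have hky : w y + τ * ψ y = 0 := by
    rw [div_eq_iff (hψpos y hyS).ne'] at hτ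
    linarith
  have hknn (x : E) (hx : x ∈ S) : 0 ≤ w x + τ * ψ x := by
    have : -τ ≤ w x / ψ x := hτ ▸ hmin hx
    rw [le_div_iff₀ (hψpos x hx)] at this
    linarith
  refine (pos_of_laplacian_neg (k := w + τ • ψ) hS hU hUS
    (hw.add (hψ.continuous.continuousOn.const_smul τ)) (hwU.add (hψ.contDiffOn.const_smul τ))
    (fun x hx => add_pos_of_nonneg_of_pos (hbdry x hx) (mul_pos hτpos (hψpos x hx.1)))
    (fun x hx hkx => ?_) y hyS).ne' hky
  have hwx : w x = -(τ * ψ x) := eq_neg_of_add_eq_zero_left (le_antisymm hkx (hknn x (hUS hx)))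
  have hτψ : 0 < τ * ψ x := mul_pos hτpos (hψpos x (hUS hx))
  rw [(hwU.contDiffAt (hU.mem_nhds hx)).laplacian_add (f₂ := τ • ψ)
    (hψ.contDiffAt.const_smul τ),
    InnerProductSpace.laplacian_smul τ hψ.contDiffAt, smul_eq_mul]
  calc Δ w x + τ * Δ ψ x ≤ -(K * w x) + τ * Δ ψ x := by
        linarith [hwΔ x hx (by linarith)]
    _ = τ * (Δ ψ x + K * ψ x) := by rw [hwx]; ring
    _ < 0 := mul_neg_of_pos_of_neg hτpos (hψΔ x hx)

theorem lt_of_laplacian_lt {S U : Set E} (hS : IsCompact S) (hU : IsOpen U) (hUS : U ⊆ S)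
    {h w : E → ℝ} {K : ℝ} (hK : 0 ≤ K) (hh : ContinuousOn h S) (hhU : ContDiffOn ℝ 2 h U)
    (hw : ContinuousOn w S) (hwU : ContDiffOn ℝ 2 w U) (hbdry : ∀ x ∈ S \ U, h x < w x)
    (hhΔ : ∀ x ∈ U, K * h x < Δ h x) (hwΔ : ∀ x ∈ U, Δ w x ≤ K * w x) :
    ∀ x ∈ S, h x < w x := by
  intro x hx
  refine sub_pos.1 (pos_of_laplacian_neg (k := w - h) hS hU hUS (hw.sub hh) (hwU.sub hhU)
    (fun y hy => sub_pos.2 (hbdry y hy)) (fun y hy hky => ?_) x hx)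
  rw [(hwU.contDiffAt (hU.mem_nhds hy)).laplacian_sub (hhU.contDiffAt (hU.mem_nhds hy))]
  calc Δ w y - Δ h y < K * w y - K * h y := by linarith [hwΔ y hy, hhΔ y hy]
    _ = K * (w y - h y) := (mul_sub ..).symm
    _ ≤ 0 := mul_nonpos_of_nonneg_of_nonpos hK hky

theorem exists_hopf_barrier {g : E → ℝ} (hg : ContDiff ℝ 2 g) {z : E} (hgz : g z = 0)
    (hg' : fderiv ℝ g z ≠ 0) (K : ℝ) :
    ∃ h : E → ℝ, ContDiff ℝ 2 h ∧ h z = 0 ∧ (∀ x, g x < 0 → h x < 0) ∧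
      ∀ᶠ x in 𝓝 z, K * h x < Δ h x := by
  obtain ⟨μ, hμ, hΔ⟩ := exists_forall_lt_laplacian_exp_mul hg isCompact_singleton
    (forall_eq.2 hgz) (forall_eq.2 hg') 0
  have hexp : ContDiff ℝ 2 fun x => Real.exp (μ * g x) := by fun_prop
  let h : E → ℝ := (fun x => Real.exp (μ * g x)) - fun _ => 1
  have hh : ContDiff ℝ 2 h := hexp.sub contDiff_const
  have hhz : h z = 0 := by simp [h, hgz]
  refine ⟨h, hh, hhz, fun x hx => ?_, ?_⟩
  · exact sub_neg.2 (Real.exp_lt_one_iff.2 (mul_neg_of_pos_of_neg hμ hx))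
  · refine (hh.continuous.const_mul K).continuousAt.eventually_lt
      (continuous_laplacian hh).continuousAt ?_
    rw [hhz, mul_zero, hexp.contDiffAt.laplacian_sub contDiffAt_const,
      InnerProductSpace.laplacian_const, Pi.zero_apply, sub_zero]
    exact hΔ z rfl

theorem frequently_nonpos_of_touching {g w : E → ℝ} {z : E} {K : ℝ} (hg : ContDiff ℝ 2 g)
    (hgz : g z = 0) (hg' : fderiv ℝ g z ≠ 0) (hw : ContDiffAt ℝ 2 w z) (hwz : w z = 0)
    (hwnn : ∀ᶠ x in 𝓝 z, 0 ≤ w x) (hwΔ : ∀ᶠ x in 𝓝 z, Δ w x ≤ K * w x) :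
    ∃ᶠ x in 𝓝[≠] z, 0 ≤ g x ∧ w x ≤ 0 := by
  intro hpos
  obtain ⟨h, hh, hhz, hhneg, hhΔ⟩ := exists_hopf_barrier hg hgz hg' |K|
  obtain ⟨ρ, hρ, hball⟩ := Metric.nhds_basis_closedBall.eventually_iff.1
    ((hw.eventually (by simp)).and <| hwnn.and <| hwΔ.and <| hhΔ.and <|
      eventually_nhdsWithin_iff.1 hpos)
  have hwc : ContinuousOn w (Metric.closedBall z ρ) := fun x hx =>
    (hball hx).1.continuousAt.continuousWithinAt
  have hsphere : Metric.sphere z ρ ⊆ Metric.closedBall z ρ := Metric.sphere_subset_closedBall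
  have hinner : Metric.ball z ρ ⊆ Metric.closedBall z ρ := Metric.ball_subset_closedBall
  obtain ⟨ε, hε, hεh⟩ := exists_pos_forall_mul_lt
    ((isCompact_sphere z ρ).inter_right (isClosed_le continuous_const hg.continuous))
    (hwc.mono (inter_subset_left.trans hsphere)) hh.continuous.continuousOn fun x hx => by
      obtain ⟨-, -, -, -, hxpos⟩ := hball (hsphere hx.1)
      exact not_le.1 fun hwx => hxpos (Metric.ne_of_mem_sphere hx.1 hρ.ne') ⟨hx.2, hwx⟩
  have hlt : (ε • h) z < w z := by
    refine lt_of_laplacian_lt (isCompact_closedBall z ρ) Metric.isOpen_ball hinner (abs_nonneg K)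
      (hh.continuous.const_smul ε).continuousOn (hh.const_smul ε).contDiffOn hwc
      (fun x hx => (hball (hinner hx)).1.contDiffWithinAt) (fun x ⟨hx, hxball⟩ => ?_)
      (fun x hx => ?_) (fun x hx => ?_) z (Metric.mem_closedBall_self hρ.le)
    · rcases le_or_gt 0 (g x) with hgx | hgx
      · exact hεh x ⟨le_antisymm hx (not_lt.1 hxball), hgx⟩
      · exact (mul_neg_of_pos_of_neg hε (hhneg x hgx)).trans_le (hball hx).2.1
    · obtain ⟨-, -, -, hhΔx, -⟩ := hball (hinner hx)
      rw [InnerProductSpace.laplacian_smul ε hh.contDiffAt, Pi.smul_apply, smul_eq_mul,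
        smul_eq_mul, mul_left_comm]
      gcongr
    · obtain ⟨-, hwnnx, hwΔx, -, -⟩ := hball (hinner hx)
      exact hwΔx.trans (mul_le_mul_of_nonneg_right (le_abs_self K) hwnnx)
  simp [hwz, hhz] at hlt

theorem exists_mem_ball_nonpos_of_laplacian_le_mul {w : E → ℝ} {p z : E} {K : ℝ} (hpz : p ≠ z)
    (hw : ContDiffAt ℝ 2 w z) (hwz : w z = 0) (hwnn : ∀ᶠ x in 𝓝 z, 0 ≤ w x)
    (hwΔ : ∀ᶠ x in 𝓝 z, Δ w x ≤ K * w x) : ∃ x ∈ Metric.ball p (dist p z), w x ≤ 0 := by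
  -- `{x | 0 ≤ g x}` is the closed ball with diameter `[p, z]`, which meets the sphere of center
  -- `p` through `z` only at `z`.
  let g : E → ℝ := fun x => ⟪x - z, p - x⟫_ℝ
  have hg : ContDiff ℝ 2 g := (contDiff_id.sub contDiff_const).inner ℝ
    (contDiff_const.sub contDiff_id)
  have hg' : fderiv ℝ g z ≠ 0 := by
    intro h
    have hgpz : fderiv ℝ g z (p - z) = ⟪p - z, p - z⟫_ℝ := by
      simp only [g]
      rw [fderiv_inner_apply ℝ (by fun_prop) (by fun_prop), fderiv_sub_const]
      simp
    rw [h, zero_apply, eq_comm, inner_self_eq_zero] at hgpz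
    exact hpz (sub_eq_zero.1 hgpz)
  obtain ⟨x, ⟨hgx, hwx⟩, hxz⟩ := ((frequently_nonpos_of_touching hg (by simp [g]) hg' hw hwz hwnn
    hwΔ).and_eventually self_mem_nhdsWithin).exists
  refine ⟨x, ?_, hwx⟩
  have hexpand : ‖p - z‖ ^ 2 = ‖x - z‖ ^ 2 + 2 * g x + ‖p - x‖ ^ 2 := by
    rw [← norm_add_sq_real, add_comm, sub_add_sub_cancel]
  have hxz' : 0 < ‖x - z‖ ^ 2 := pow_pos (norm_pos_iff.2 (sub_ne_zero.2 hxz)) 2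
  rw [Metric.mem_ball', dist_eq_norm, dist_eq_norm]
  exact lt_of_pow_lt_pow_left₀ 2 (norm_nonneg _) (by linarith)

theorem eq_zero_of_laplacian_le_mul {Ω : Set E} (hΩo : IsOpen Ω) (hΩc : IsPreconnected Ω)
    {w : E → ℝ} (hw : ContDiffOn ℝ 2 w Ω) (hwnn : ∀ x ∈ Ω, 0 ≤ w x)
    (hwΔ : ∀ z ∈ Ω, w z = 0 → ∃ K : ℝ, ∀ᶠ x in 𝓝 z, Δ w x ≤ K * w x)
    (hzero : ∃ x ∈ Ω, w x = 0) : ∀ x ∈ Ω, w x = 0 := by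
  by_contra! ⟨q, hq, hwq⟩
  obtain ⟨x₁, hx₁, hwx₁⟩ := hzero
  let U : Set E := Ω ∩ w ⁻¹' Ioi 0
  have hUo : IsOpen U := hw.continuousOn.isOpen_inter_preimage hΩo isOpen_Ioi
  obtain ⟨p, hpU, z, ⟨hzΩ, hzU⟩, hball⟩ := exists_ball_subset_of_not_subset hΩo hΩc hUo
    ⟨q, hq, hq, (hwnn q hq).lt_of_ne' hwq⟩ fun hΩU => (hΩU hx₁).2.ne' hwx₁
  have hpz : p ≠ z := fun h => hzU (h ▸ hpU)
  have hwz : w z = 0 := le_antisymm (not_lt.1 fun h => hzU ⟨hzΩ, h⟩) (hwnn z hzΩ)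
  obtain ⟨K, hK⟩ := hwΔ z hzΩ hwz
  obtain ⟨x, hx, hwx⟩ := exists_mem_ball_nonpos_of_laplacian_le_mul hpz
    (hw.contDiffAt (hΩo.mem_nhds hzΩ)) hwz (eventually_of_mem (hΩo.mem_nhds hzΩ) hwnn) hK
  exact hwx.not_gt (hball hx).2

end MaximumPrinciple

section Comparison

variable {E : Type*} [NormedAddCommGroup E] [InnerProductSpace ℝ E] [FiniteDimensional ℝ E]
  {Ω : Set E} {A B : E → ℝ} {F : ℝ → ℝ} {u₁ u₂ : E → ℝ}

/-- A `C²` defining function `f` of `Ω`, from which barriers near `∂Ω` are built. Only `f ≤ 0` on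
`Ω` is required inside: `f` may vanish at interior points. -/
structure IsDefiningFunction (f : E → ℝ) (Ω : Set E) : Prop where
  contDiff : ContDiff ℝ 2 f
  nonpos : ∀ x ∈ Ω, f x ≤ 0
  eq_zero : ∀ x ∈ frontier Ω, f x = 0
  fderiv_ne_zero : ∀ x ∈ frontier Ω, fderiv ℝ f x ≠ 0

/-- Classical (`C²`) subsolutions of `Δu + A u - B F(u) = 0` on `Ω`. -/
structure IsSubsolution (A B : E → ℝ) (F : ℝ → ℝ) (Ω : Set E) (u : E → ℝ) : Prop where
  contDiffOn : ContDiffOn ℝ 2 u Ω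
  nonneg : ∀ x ∈ Ω, 0 ≤ Δ u x + A x * u x - B x * F (u x)

/-- Classical (`C²`) supersolutions of `Δu + A u - B F(u) = 0` on `Ω`. -/
structure IsSupersolution (A B : E → ℝ) (F : ℝ → ℝ) (Ω : Set E) (u : E → ℝ) : Prop where
  contDiffOn : ContDiffOn ℝ 2 u Ω
  nonpos : ∀ x ∈ Ω, Δ u x + A x * u x - B x * F (u x) ≤ 0

theorem IsDefiningFunction.exists_strict_supersolution {f : E → ℝ} (hf : IsDefiningFunction f Ω)
    (hΩb : Bornology.IsBounded Ω) (K : ℝ) :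
    ∃ ψ : E → ℝ, ContDiff ℝ 2 ψ ∧ (∀ x ∈ closure Ω, 0 < ψ x) ∧
      ∀ x ∈ frontier Ω, Δ ψ x + K * ψ x < 0 := by
  have hcompact : IsCompact (frontier Ω) :=
    hΩb.isCompact_closure.of_isClosed_subset isClosed_frontier frontier_subset_closure
  obtain ⟨μ, hμ, hΔ⟩ := exists_forall_lt_laplacian_exp_mul hf.contDiff hcompact hf.eq_zero
    hf.fderiv_ne_zero K
  have hexp : ContDiff ℝ 2 fun x => Real.exp (μ * f x) := by
    have := hf.contDiff
    fun_prop
  refine ⟨(fun _ => 2) - fun x => Real.exp (μ * f x), contDiff_const.sub hexp,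
    fun x hx => ?_, fun x hx => ?_⟩
  · have hfx : f x ≤ 0 := le_on_closure hf.nonpos hf.contDiff.continuous.continuousOn
      continuousOn_const hx
    have hexp1 : Real.exp (μ * f x) ≤ 1 :=
      Real.exp_le_one_iff.2 (mul_nonpos_of_nonneg_of_nonpos hμ.le hfx)
    simp only [Pi.sub_apply]
    linarith
  · rw [contDiffAt_const.laplacian_sub hexp.contDiffAt, InnerProductSpace.laplacian_const]
    simp only [Pi.sub_apply, Pi.zero_apply, hf.eq_zero x hx, mul_zero, Real.exp_zero]
    linarith [hΔ x hx]

theorem mul_sub_lt_div_mul_of_strictMonoOn_div (hF : StrictMonoOn (fun t => F t / t) (Ioi 0))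
    {s t : ℝ} (hs : 0 < s) (hst : s < t) (M : ℝ) :
    M * F s - F t < F s / s * (M * s - t) := by
  have hratio : F s / s * t < F t := (lt_div_iff₀ (hs.trans hst)).1 (hF hs (hs.trans hst) hst)
  calc M * F s - F t < M * F s - F s / s * t := by linarith
    _ = F s / s * (M * s - t) := by field_simp

theorem laplacian_smul_sub_le (hΩo : IsOpen Ω) (hsub : IsSubsolution A B F Ω u₁)
    (hsup : IsSupersolution A B F Ω u₂) {M : ℝ} (hM : 0 ≤ M) {x : E} (hx : x ∈ Ω) :
    Δ (M • u₂ - u₁) x ≤ B x * (M * F (u₂ x) - F (u₁ x)) - A x * (M * u₂ x - u₁ x) := by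
  have hu₁ : ContDiffAt ℝ 2 u₁ x := hsub.contDiffOn.contDiffAt (hΩo.mem_nhds hx)
  have hu₂ : ContDiffAt ℝ 2 u₂ x := hsup.contDiffOn.contDiffAt (hΩo.mem_nhds hx)
  rw [ContDiffAt.laplacian_sub (f₁ := M • u₂) (hu₂.const_smul M) hu₁,
    InnerProductSpace.laplacian_smul M hu₂, smul_eq_mul]
  linarith [hsub.nonneg x hx, mul_nonpos_of_nonneg_of_nonpos hM (hsup.nonpos x hx)]

theorem laplacian_smul_sub_le_mul (hΩo : IsOpen Ω) (hF : StrictMonoOn (fun t => F t / t) (Ioi 0))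
    (hsub : IsSubsolution A B F Ω u₁) (hsup : IsSupersolution A B F Ω u₂) {M : ℝ} (hM : 0 ≤ M)
    {x : E} (hx : x ∈ Ω) (hBx : 0 ≤ B x) (hu₂x : 0 < u₂ x) (hlt : u₂ x < u₁ x) :
    Δ (M • u₂ - u₁) x ≤ (B x * (F (u₂ x) / u₂ x) - A x) * (M * u₂ x - u₁ x) := by
  calc Δ (M • u₂ - u₁) x ≤ B x * (M * F (u₂ x) - F (u₁ x)) - A x * (M * u₂ x - u₁ x) :=
        laplacian_smul_sub_le hΩo hsub hsup hM hx
    _ ≤ B x * (F (u₂ x) / u₂ x * (M * u₂ x - u₁ x)) - A x * (M * u₂ x - u₁ x) := by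
        gcongr
        exact (mul_sub_lt_div_mul_of_strictMonoOn_div hF hu₂x hlt M).le
    _ = (B x * (F (u₂ x) / u₂ x) - A x) * (M * u₂ x - u₁ x) := by ring

theorem exists_compact_forall_le_mul {f : E → ℝ} (hΩo : IsOpen Ω) (hΩb : Bornology.IsBounded Ω)
    (hf : IsDefiningFunction f Ω) (hA : BddAbove (A '' Ω)) (hB : ∀ x ∈ Ω, 0 ≤ B x)
    (hFnn : ∀ t, 0 < t → 0 ≤ F t) (hF : StrictMonoOn (fun t => F t / t) (Ioi 0))
    (hsub : IsSubsolution A B F Ω u₁) (hsup : IsSupersolution A B F Ω u₂)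
    (hu₁ : ContinuousOn u₁ (closure Ω)) (hu₂ : ContinuousOn u₂ (closure Ω))
    (hu₂pos : ∀ x ∈ Ω, 0 < u₂ x) (hbdry : ∀ x ∈ frontier Ω, u₁ x ≤ u₂ x) :
    ∃ C ⊆ Ω, IsCompact C ∧
      ∀ M, 1 ≤ M → (∀ x ∈ C, u₁ x ≤ M * u₂ x) → ∀ x ∈ Ω, u₁ x ≤ M * u₂ x := by
  obtain ⟨K, hK⟩ := hA
  obtain ⟨ψ, hψ, hψpos, hψΔ⟩ := hf.exists_strict_supersolution hΩb K
  let V : Set E := {x | Δ ψ x + K * ψ x < 0}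
  have hVo : IsOpen V :=
    isOpen_lt ((continuous_laplacian hψ).add (hψ.continuous.const_mul K)) continuous_const
  have hu₂nn (x : E) (hx : x ∈ closure Ω) : 0 ≤ u₂ x :=
    le_on_closure (fun y hy => (hu₂pos y hy).le) continuousOn_const hu₂ hx
  have hfrontier {x : E} (hx : x ∈ closure Ω) (hxΩ : x ∉ Ω) : x ∈ frontier Ω :=
    hΩo.frontier_eq ▸ ⟨hx, hxΩ⟩
  refine ⟨closure Ω \ V, fun x hx => ?_, hΩb.isCompact_closure.diff hVo, fun M hM hC x hx => ?_⟩
  · by_contra hxΩ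
    exact hx.2 (hψΔ x (hfrontier hx.1 hxΩ))
  refine sub_nonneg.1 (nonneg_of_strict_supersolution (w := M • u₂ - u₁) hΩb.isCompact_closure
    (hΩo.inter hVo) (inter_subset_left.trans subset_closure) ((hu₂.const_smul M).sub hu₁)
    (((hsup.contDiffOn.const_smul M).sub hsub.contDiffOn).mono inter_subset_left) hψ hψpos
    (fun y hy => hy.2) (fun y hy => sub_nonneg.2 ?_) (fun y hy hwy => ?_) x (subset_closure hx))
  · by_cases hyΩ : y ∈ Ω
    · exact hC y ⟨hy.1, fun hyV => hy.2 ⟨hyΩ, hyV⟩⟩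
    · exact (hbdry y (hfrontier hy.1 hyΩ)).trans (le_mul_of_one_le_left (hu₂nn y hy.1) hM)
  · have hu₂y : 0 < u₂ y := hu₂pos y hy.1
    have hlt : u₂ y < u₁ y := (le_mul_of_one_le_left hu₂y.le hM).trans_lt (sub_neg.1 hwy)
    have hBF : 0 ≤ B y * (F (u₂ y) / u₂ y) :=
      mul_nonneg (hB y hy.1) (div_nonneg (hFnn _ hu₂y) hu₂y.le)
    have hcoeff : -K ≤ B y * (F (u₂ y) / u₂ y) - A y := by
      linarith [hK (mem_image_of_mem A hy.1)]
    have hΔ := laplacian_smul_sub_le_mul hΩo hF hsub hsup (zero_le_one.trans hM) hy.1 (hB y hy.1)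
      hu₂y hlt
    have := mul_le_mul_of_nonpos_right hcoeff hwy.le
    simp only [Pi.sub_apply, Pi.smul_apply, smul_eq_mul] at this ⊢
    linarith

theorem eq_mul_of_touching (hΩo : IsOpen Ω) (hΩc : IsPreconnected Ω) (hA : ContinuousOn A Ω)
    (hB : ContinuousOn B Ω) (hBnn : ∀ x ∈ Ω, 0 ≤ B x)
    (hF : StrictMonoOn (fun t => F t / t) (Ioi 0)) (hsub : IsSubsolution A B F Ω u₁)
    (hsup : IsSupersolution A B F Ω u₂) (hu₂pos : ∀ x ∈ Ω, 0 < u₂ x) {M : ℝ} (hM : 1 < M)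
    (hle : ∀ x ∈ Ω, u₁ x ≤ M * u₂ x) (htouch : ∃ x ∈ Ω, u₁ x = M * u₂ x) :
    ∀ x ∈ Ω, u₁ x = M * u₂ x := by
  suffices h : ∀ x ∈ Ω, (M • u₂ - u₁) x = 0 from fun x hx => (sub_eq_zero.1 (h x hx)).symm
  refine eq_zero_of_laplacian_le_mul hΩo hΩc
    ((hsup.contDiffOn.const_smul M).sub hsub.contDiffOn) (fun x hx => sub_nonneg.2 (hle x hx))
    (fun z hz hwz => ?_) (htouch.imp fun x hx => ⟨hx.1, sub_eq_zero.2 hx.2.symm⟩)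
  have hΩz : Ω ∈ 𝓝 z := hΩo.mem_nhds hz
  have hu₁c : ContinuousAt u₁ z := hsub.contDiffOn.continuousOn.continuousAt hΩz
  have hu₂c : ContinuousAt u₂ z := hsup.contDiffOn.continuousOn.continuousAt hΩz
  have hlt : u₂ z < u₁ z := by
    calc u₂ z < M * u₂ z := lt_mul_of_one_lt_left (hu₂pos z hz) hM
      _ = u₁ z := sub_eq_zero.1 hwz
  have hcoeff : ContinuousAt (fun x => B x * (F (u₁ z) / u₁ z) - A x) z :=
    ((hB.continuousAt hΩz).mul_const _).sub (hA.continuousAt hΩz)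
  refine ⟨B z * (F (u₁ z) / u₁ z) - A z + 1, ?_⟩
  filter_upwards [hΩz, hu₂c.eventually_lt hu₁c hlt, hu₂c.eventually_lt_const hlt,
    hcoeff.eventually_lt_const (lt_add_one _)] with x hx hxlt hxz hxcoeff
  have hratio : F (u₂ x) / u₂ x ≤ F (u₁ z) / u₁ z :=
    (hF (hu₂pos x hx) ((hu₂pos x hx).trans hxz) hxz).le
  have hBratio := mul_le_mul_of_nonneg_left hratio (hBnn x hx)
  refine (laplacian_smul_sub_le_mul hΩo hF hsub hsup (by linarith) hx (hBnn x hx)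
    (hu₂pos x hx) hxlt).trans (mul_le_mul_of_nonneg_right ?_ (sub_nonneg.2 (hle x hx)))
  linarith

theorem not_forall_eq_mul (hΩo : IsOpen Ω) (hBnn : ∀ x ∈ Ω, 0 ≤ B x) (hBne : ∃ x ∈ Ω, B x ≠ 0)
    (hF : StrictMonoOn (fun t => F t / t) (Ioi 0)) (hsub : IsSubsolution A B F Ω u₁)
    (hsup : IsSupersolution A B F Ω u₂) (hu₂pos : ∀ x ∈ Ω, 0 < u₂ x) {M : ℝ} (hM : 1 < M) :
    ¬ ∀ x ∈ Ω, u₁ x = M * u₂ x := by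
  intro heq
  obtain ⟨x, hx, hBx⟩ := hBne
  have hux : M * u₂ x - u₁ x = 0 := sub_eq_zero.2 (heq x hx).symm
  have hw : M • u₂ - u₁ =ᶠ[𝓝 x] fun _ => 0 :=
    eventually_of_mem (hΩo.mem_nhds hx) fun y hy => sub_eq_zero.2 (heq y hy).symm
  have hΔ : Δ (M • u₂ - u₁) x = 0 := by
    simpa using (InnerProductSpace.laplacian_congr_nhds hw).eq_of_nhds
  have hlt : u₂ x < u₁ x := heq x hx ▸ lt_mul_of_one_lt_left (hu₂pos x hx) hM
  have hFneg : M * F (u₂ x) - F (u₁ x) < 0 := by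
    simpa [hux] using mul_sub_lt_div_mul_of_strictMonoOn_div hF (hu₂pos x hx) hlt M
  have hle := laplacian_smul_sub_le hΩo hsub hsup (zero_le_one.trans hM.le) hx
  rw [hΔ, hux, mul_zero, sub_zero] at hle
  exact hle.not_gt (mul_neg_of_pos_of_neg ((hBnn x hx).lt_of_ne' hBx) hFneg)

theorem comparison_principle_general {f : E → ℝ} (hΩo : IsOpen Ω) (hΩb : Bornology.IsBounded Ω)
    (hΩc : IsPreconnected Ω) (hf : IsDefiningFunction f Ω) (hA : ContinuousOn A Ω)
    (hAbdd : BddAbove (A '' Ω)) (hB : ContinuousOn B Ω) (hBnn : ∀ x ∈ Ω, 0 ≤ B x)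
    (hBne : ∃ x ∈ Ω, B x ≠ 0) (hFnn : ∀ t, 0 < t → 0 ≤ F t)
    (hF : StrictMonoOn (fun t => F t / t) (Ioi 0)) (hsub : IsSubsolution A B F Ω u₁)
    (hsup : IsSupersolution A B F Ω u₂) (hu₁ : ContinuousOn u₁ (closure Ω))
    (hu₂ : ContinuousOn u₂ (closure Ω)) (hu₂pos : ∀ x ∈ Ω, 0 < u₂ x)
    (hbdry : ∀ x ∈ frontier Ω, u₁ x ≤ u₂ x) :
    ∀ x ∈ Ω, u₁ x ≤ u₂ x := by
  obtain ⟨C, hCΩ, hC, hcore⟩ := exists_compact_forall_le_mul hΩo hΩb hf hAbdd hBnn hFnn hF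
    hsub hsup hu₁ hu₂ hu₂pos hbdry
  suffices hleC : ∀ x ∈ C, u₁ x ≤ u₂ x by
    simpa only [one_mul] using hcore 1 le_rfl (by simpa only [one_mul] using hleC)
  by_contra! ⟨q, hq, hlt⟩
  have hCcl : C ⊆ closure Ω := hCΩ.trans subset_closure
  obtain ⟨y, hy, hmax⟩ := hC.exists_isMaxOn ⟨q, hq⟩
    ((hu₁.mono hCcl).div (hu₂.mono hCcl) fun x hx => (hu₂pos x (hCΩ hx)).ne')
  have hM : 1 < u₁ y / u₂ y := ((one_lt_div (hu₂pos q (hCΩ hq))).2 hlt).trans_le (hmax hq)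
  have hle : ∀ x ∈ Ω, u₁ x ≤ u₁ y / u₂ y * u₂ x :=
    hcore _ hM.le fun x hx => (div_le_iff₀ (hu₂pos x (hCΩ hx))).1 (hmax hx)
  have htouch : u₁ y = u₁ y / u₂ y * u₂ y := (div_mul_cancel₀ _ (hu₂pos y (hCΩ hy)).ne').symm
  exact not_forall_eq_mul hΩo hBnn hBne hF hsub hsup hu₂pos hM
    (eq_mul_of_touching hΩo hΩc hA hB hBnn hF hsub hsup hu₂pos hM hle ⟨y, hCΩ hy, htouch⟩)

end Comparison

section Euclidean

variable {m : ℕ} {Ω : Set (EuclideanSpace ℝ (Fin m))}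

theorem laplacian_eq_of_contDiffOn {u : EuclideanSpace ℝ (Fin m) → ℝ} (hΩo : IsOpen Ω)
    (hu : ContDiffOn ℝ 2 u Ω) {x : EuclideanSpace ℝ (Fin m)} (hx : x ∈ Ω) :
    laplacian u x = Δ u x := by
  have hu' : DifferentiableAt ℝ (fderiv ℝ u) x :=
    ((hu.contDiffAt (hΩo.mem_nhds hx)).fderiv_right (m := 1) (by norm_num)).differentiableAt
      one_ne_zero
  rw [laplacian, laplacian_eq_sum_fderiv_fderiv (EuclideanSpace.basisFun (Fin m) ℝ)]
  refine Finset.sum_congr rfl fun i _ => ?_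
  rw [fderiv_clm_apply hu' (differentiableAt_const _)]
  simp

theorem isSubsolution_of_laplacian_nonneg {A B u : EuclideanSpace ℝ (Fin m) → ℝ} {F : ℝ → ℝ}
    (hΩo : IsOpen Ω) (hu : ContDiffOn ℝ 2 u Ω)
    (hsub : ∀ x ∈ Ω, 0 ≤ laplacian u x + A x * u x - B x * F (u x)) :
    IsSubsolution A B F Ω u :=
  ⟨hu, fun x hx => laplacian_eq_of_contDiffOn hΩo hu hx ▸ hsub x hx⟩

theorem isSupersolution_of_laplacian_nonpos {A B u : EuclideanSpace ℝ (Fin m) → ℝ} {F : ℝ → ℝ}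
    (hΩo : IsOpen Ω) (hu : ContDiffOn ℝ 2 u Ω)
    (hsup : ∀ x ∈ Ω, laplacian u x + A x * u x - B x * F (u x) ≤ 0) :
    IsSupersolution A B F Ω u :=
  ⟨hu, fun x hx => laplacian_eq_of_contDiffOn hΩo hu hx ▸ hsup x hx⟩

theorem HasSmoothBoundary.exists_isDefiningFunction (hΩ : HasSmoothBoundary Ω) :
    ∃ f : EuclideanSpace ℝ (Fin m) → ℝ, IsDefiningFunction f Ω := by
  obtain ⟨f, hf, rfl, hf'⟩ := hΩ
  exact ⟨f, hf.of_le (WithTop.coe_le_coe.2 le_top), fun x hx => le_of_lt hx,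
    fun x hx => frontier_lt_subset_eq hf.continuous continuous_const hx, hf'⟩

end Euclidean

/-- The comparison Proposition 3.3 of the paper with `p = 2`, `f ≡ 0`, for classical sub-
and supersolutions of `Δu + A u − B F(u) = 0` on a bounded, connected, smooth domain
`Ω ⊂ ℝ^m`, with `B ≥ 0` not identically zero on `Ω`: `u₁ ≤ u₂` on `∂Ω` implies
`u₁ ≤ u₂` on `Ω`. -/
theorem comparison_principle (m : ℕ) (hm : 1 ≤ m)
    (Ω : Set (EuclideanSpace ℝ (Fin m)))
    (hΩo : IsOpen Ω) (hΩb : Bornology.IsBounded Ω) (hΩc : IsConnected Ω)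
    (hΩs : HasSmoothBoundary Ω)
    (A B : EuclideanSpace ℝ (Fin m) → ℝ)
    (hA : ContinuousOn A (closure Ω)) (hB : ContinuousOn B (closure Ω))
    (hBnn : ∀ x ∈ closure Ω, 0 ≤ B x) (hBne : ∃ x ∈ Ω, B x ≠ 0)
    (F : ℝ → ℝ) (hF : IsNonlinearity F)
    (u₁ u₂ : EuclideanSpace ℝ (Fin m) → ℝ)
    (hu₁C1 : ContDiffOn ℝ 1 u₁ (closure Ω)) (hu₁C2 : ContDiffOn ℝ 2 u₁ Ω)
    (hu₂C1 : ContDiffOn ℝ 1 u₂ (closure Ω)) (hu₂C2 : ContDiffOn ℝ 2 u₂ Ω)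
    (hsub : ∀ x ∈ Ω, 0 ≤ laplacian u₁ x + A x * u₁ x - B x * F (u₁ x))
    (hsup : ∀ x ∈ Ω, laplacian u₂ x + A x * u₂ x - B x * F (u₂ x) ≤ 0)
    (hu₁nn : ∀ x ∈ Ω, 0 ≤ u₁ x) (hu₂pos : ∀ x ∈ Ω, 0 < u₂ x)
    (hbdry : ∀ x ∈ frontier Ω, u₁ x ≤ u₂ x) :
    ∀ x ∈ Ω, u₁ x ≤ u₂ x := by
  obtain ⟨f, hf⟩ := hΩs.exists_isDefiningFunction
  have hΩcl : Ω ⊆ closure Ω := subset_closure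
  exact comparison_principle_general hΩo hΩb hΩc.isPreconnected hf (hA.mono hΩcl)
    ((hΩb.isCompact_closure.bddAbove_image hA).mono (image_mono hΩcl)) (hB.mono hΩcl)
    (fun x hx => hBnn x (hΩcl hx)) hBne (fun t ht => (hF.pos t ht).le) hF.strictMono
    (isSubsolution_of_laplacian_nonneg hΩo hu₁C2 hsub)
    (isSupersolution_of_laplacian_nonpos hΩo hu₂C2 hsup)
    hu₁C1.continuousOn hu₂C1.continuousOn hu₂pos hbdry
end
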